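/- For every closed term M of Λ⊕, the call-by-value small-step semantics is compositional: (1) if M is a value V, then ⟦M⟧v = {V^1}; (2) if M is an application N L, then ⟦M⟧v = Σ_{λx.P∈supp(⟦N⟧v), V∈supp(⟦L⟧v)} ⟦N⟧v(λx.P)·⟦L⟧v(V)·⟦P[V/x]⟧v; (3) if M is a sum N ⊕ L, then ⟦M⟧v = ½·⟦N⟧v·(Σ⟦L⟧v) + ½·⟦L⟧v·(Σ⟦N⟧v). -/

import Mathlib

open scoped ENNReal

/-- Terms of Λ⊕ (and of Λ⊕⁺), in de Bruijn notation: variables, abstractions,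
applications and binary (probabilistic) sums.  De Bruijn indices realize
"terms up to renaming of bound variables". -/
inductive Term : Type
  | var : ℕ → Term
  | lam : Term → Term
  | app : Term → Term → Term
  | choice : Term → Term → Term
  deriving DecidableEq

namespace Term

/-- Values: variables and abstractions. -/
inductive IsValue : Term → Prop
  | var (n : ℕ) : IsValue (var n)
  | lam (M : Term) : IsValue (lam M)

/-- Boolean value test. -/
def isVal : Term → Bool
  | var _ => true
  | lam _ => true
  | _ => false

/-- Shifting of de Bruijn indices: add `d` to all indices `≥ c`. -/
def shift (d c : ℕ) : Term → Term
  | var n => if n < c then var n else var (n + d)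
  | lam M => lam (shift d (c + 1) M)
  | app M N => app (shift d c M) (shift d c N)
  | choice M N => choice (shift d c M) (shift d c N)

/-- Capture-avoiding substitution `M[j := N]` (the variable `j` is consumed and
higher indices are decremented, as in a β-step). -/
def subst : Term → ℕ → Term → Term
  | var n, j, N => if n = j then shift j 0 N else if j < n then var (n - 1) else var n
  | lam M, j, N => lam (subst M (j + 1) N)
  | app M L, j, N => app (subst M j N) (subst L j N)
  | choice M L, j, N => choice (subst M j N) (subst L j N)

/-- All free indices are `< n`. -/
def closedUnder : Term → ℕ → Prop
  | var m, n => m < n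
  | lam M, n => closedUnder M (n + 1)
  | app M N, n => closedUnder M n ∧ closedUnder N n
  | choice M N, n => closedUnder M n ∧ closedUnder N n

/-- Closed terms: no free variables. -/
def Closed (M : Term) : Prop := closedUnder M 0

end Term

/-- (Sub)distributions are represented as functions from terms into `ℝ≥0∞`;
genuine distributions (`IsDist`) are supported on values and have mass `≤ 1`. -/
abbrev PDist := Term → ℝ≥0∞

/-- The sum (total mass) `Σ𝒟` of a distribution. -/
noncomputable def dsum (D : PDist) : ℝ≥0∞ := ∑' M, D M

/-- The support of a distribution. -/
def dsupp (D : PDist) : Set Term := {M | D M ≠ 0}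

/-- The everywhere-zero distribution `∅`. -/
noncomputable def dzero : PDist := fun _ => 0

/-- The Dirac distribution `{V^1}`. -/
noncomputable def dirac (V : Term) : PDist := fun M => if M = V then 1 else 0

/-- Being a genuine (sub)probability distribution: supported on values, with
total mass at most one. -/
def IsDist (D : PDist) : Prop := (∀ M, D M ≠ 0 → M.IsValue) ∧ dsum D ≤ 1

/-- Call-by-value reduction `↦v`, relating a term to the (equiprobable) finite
sequence of its possible reducts. -/
inductive RedV : Term → List Term → Prop
  | beta {M V : Term} : V.IsValue → RedV (.app (.lam M) V) [M.subst 0 V]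
  | choice {V W : Term} : V.IsValue → W.IsValue → RedV (.choice V W) [V, W]
  | appL {M N : Term} {Ls : List Term} :
      RedV M Ls → RedV (.app M N) (Ls.map (fun L => .app L N))
  | appR {V M : Term} {Ns : List Term} :
      V.IsValue → RedV M Ns → RedV (.app V M) (Ns.map (fun L => .app V L))
  | choiceL {M N : Term} {Ls : List Term} :
      RedV M Ls → RedV (.choice M N) (Ls.map (fun L => .choice L N))
  | choiceR {V M : Term} {Ns : List Term} :
      V.IsValue → RedV M Ns → RedV (.choice V M) (Ns.map (fun L => .choice V L))

/-- Call-by-name reduction `↦n`. -/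
inductive RedN : Term → List Term → Prop
  | beta {M N : Term} : RedN (.app (.lam M) N) [M.subst 0 N]
  | choice {M N : Term} : RedN (.choice M N) [M, N]
  | appL {M N : Term} {Ls : List Term} :
      RedN M Ls → RedN (.app M N) (Ls.map (fun L => .app L N))

/-- The inductive small-step convergence relation `⇒`, parametric in the
underlying reduction relation: any term evaluates to `∅`; a value `V`
evaluates to `{V^1}`; and if `M ↦ N₁,…,Nₙ` and `Nᵢ ⇒ 𝒟ᵢ` then
`M ⇒ Σᵢ (1/n)𝒟ᵢ`. -/
inductive Conv (Red : Term → List Term → Prop) : Term → PDist → Prop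
  | bot (M : Term) : Conv Red M dzero
  | val {V : Term} : V.IsValue → Conv Red V (dirac V)
  | step {M : Term} {Ns : List Term} (Ds : Fin Ns.length → PDist) :
      Red M Ns → (∀ i, Conv Red (Ns.get i) (Ds i)) →
      Conv Red M (fun W => (∑ i, Ds i W) / (Ns.length : ℝ≥0∞))

/-- Call-by-value small-step convergence `⇒v`. -/
def SmallV : Term → PDist → Prop := Conv RedV

/-- Call-by-name small-step convergence `⇒n`. -/
def SmallN : Term → PDist → Prop := Conv RedN

/-- The small-step semantics `⟦M⟧`: the pointwise supremum of all distributions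
derivable for `M`. -/
noncomputable def semOf (S : Term → PDist → Prop) (M : Term) : PDist :=
  fun W => ⨆ (D : PDist) (_ : S M D), D W

/-- Call-by-value small-step semantics `⟦M⟧v`. -/
noncomputable def semV : Term → PDist := semOf SmallV

/-- Call-by-name small-step semantics `⟦M⟧n`. -/
noncomputable def semN : Term → PDist := semOf SmallN

/-- One-step unfolding of the divergence inference system: a value diverges
with probability `0`; if `M ↦ N₁,…,Nₙ` and `Nᵢ` diverges with probability
`pᵢ`, then `M` diverges with probability `Σᵢ (1/n)pᵢ`. -/
def DivStep (Red : Term → List Term → Prop) (R : Term → ℝ≥0∞ → Prop)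
    (M : Term) (p : ℝ≥0∞) : Prop :=
  (M.IsValue ∧ p = 0) ∨
    ∃ (Ns : List Term) (ps : Fin Ns.length → ℝ≥0∞),
      Red M Ns ∧ (∀ i, R (Ns.get i) (ps i)) ∧ p = (∑ i, ps i) / (Ns.length : ℝ≥0∞)

/-- The coinductively-defined divergence relation `⇓div`: the union of all
consistent relations between terms and probabilities in `[0,1]`. -/
def Diverges (Red : Term → List Term → Prop) (M : Term) (p : ℝ≥0∞) : Prop :=
  ∃ R : Term → ℝ≥0∞ → Prop,
    (∀ N q, R N q → q ≤ 1 ∧ DivStep Red R N q) ∧ R M p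

/-- Call-by-value divergence `⇓div`. -/
def DivV : Term → ℝ≥0∞ → Prop := Diverges RedV

/-- Call-by-name divergence `⇓div,n`. -/
def DivN : Term → ℝ≥0∞ → Prop := Diverges RedN

/-- One-step unfolding of the call-by-value big-step inference system. -/
def BigVStep (R : Term → PDist → Prop) (M : Term) (D : PDist) : Prop :=
  (M.IsValue ∧ D = dirac M) ∨
  (∃ (N L : Term) (E F : PDist) (G : Term → Term → PDist),
      M = .app N L ∧ R N E ∧ R L F ∧
      (∀ P V, E (.lam P) ≠ 0 → V.IsValue → F V ≠ 0 → R (P.subst 0 V) (G P V)) ∧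
      D = fun W => ∑' (P : Term), ∑' (V : Term), E (.lam P) * F V * G P V W) ∨
  (∃ (N L : Term) (E F : PDist),
      M = .choice N L ∧ R N E ∧ R L F ∧
      D = fun W => (E W * dsum F + F W * dsum E) / 2)

/-- The coinductive call-by-value big-step relation `⇓v`: the union of all
consistent relations between terms and distributions. -/
def BigV (M : Term) (D : PDist) : Prop :=
  ∃ R : Term → PDist → Prop,
    (∀ N E, R N E → IsDist E ∧ BigVStep R N E) ∧ R M D

/-- One-step unfolding of the call-by-name big-step inference system. -/
def BigNStep (R : Term → PDist → Prop) (M : Term) (D : PDist) : Prop :=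
  (M.IsValue ∧ D = dirac M) ∨
  (∃ (N L : Term) (E : PDist) (F : Term → PDist),
      M = .app N L ∧ R N E ∧
      (∀ P, E (.lam P) ≠ 0 → R (P.subst 0 L) (F P)) ∧
      D = fun W => ∑' (P : Term), E (.lam P) * F P W) ∨
  (∃ (N L : Term) (E F : PDist),
      M = .choice N L ∧ R N E ∧ R L F ∧ D = fun W => (E W + F W) / 2)

/-- The coinductive call-by-name big-step relation `⇓n`. -/
def BigN (M : Term) (D : PDist) : Prop :=
  ∃ R : Term → PDist → Prop,
    (∀ N E, R N E → IsDist E ∧ BigNStep R N E) ∧ R M D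

/-- Big-step semantics `⟪M⟫`: the pointwise infimum of all distributions
derivable for `M` in a big-step system. -/
noncomputable def bigSemOf (B : Term → PDist → Prop) (M : Term) : PDist :=
  fun W => ⨅ (D : PDist) (_ : B M D), D W

/-!
The distributions derivable for a term under a deterministic reduction form a directed family, so
the supremum defining `⟦M⟧` commutes with sums over values. Induction on derivations then gives, for
every evaluation context `C`, the law `⟦C[M]⟧ = Σ_V ⟦M⟧(V) · ⟦C[V]⟧`. Used for the left and then for
the right operand of an application or a sum, it leaves only terms whose operands are values; these
are either stuck or reduce in one step to terms whose semantics appear in the claim.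
-/

open Term

section ENNReal

variable {α ι : Type*}

theorem tsum_iSup_eq_iSup_tsum_of_directed {f : α → ι → ℝ≥0∞}
    (hf : ∀ i j, ∃ k, ∀ a, f a i ≤ f a k ∧ f a j ≤ f a k) :
    ∑' a, ⨆ i, f a i = ⨆ i, ∑' a, f a i := by
  simp only [ENNReal.tsum_eq_iSup_sum, ENNReal.finsetSum_iSup hf]
  exact iSup_comm

theorem finsetSum_iSup_eq_iSup_pi {κ : ι → Type*} [∀ i, Nonempty (κ i)] (s : Finset ι)
    (f : ∀ i, κ i → ℝ≥0∞) :
    ∑ i ∈ s, ⨆ k, f i k = ⨆ k : ∀ i, κ i, ∑ i ∈ s, f i (k i) := by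
  classical
  have iSup_eval (i : ι) : ⨆ k, f i k = ⨆ k : ∀ i, κ i, f i (k i) :=
    ((Function.surjective_eval i).iSup_comp (f i)).symm
  simp only [iSup_eval]
  refine ENNReal.finsetSum_iSup fun k l ↦
    ⟨fun i ↦ if f i (k i) ≤ f i (l i) then l i else k i, fun i ↦ ?_⟩
  dsimp only
  split_ifs with h
  · exact ⟨h, le_rfl⟩
  · exact ⟨le_rfl, (not_le.mp h).le⟩

theorem tsum_finsetSum_div_mul (s : Finset ι) (f : ι → α → ℝ≥0∞) (c : ℝ≥0∞) (g : α → ℝ≥0∞) :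
    ∑' a, (∑ i ∈ s, f i a) / c * g a = (∑ i ∈ s, ∑' a, f i a * g a) / c := by
  simp only [← Summable.tsum_finsetSum fun _ _ ↦ ENNReal.summable, div_eq_mul_inv,
    ← ENNReal.tsum_mul_right, Finset.sum_mul, mul_right_comm]

end ENNReal

theorem tsum_dirac_mul (V : Term) (K : Term → ℝ≥0∞) : ∑' U, dirac V U * K U = K V := by
  simp [dirac]

theorem tsum_mul_dirac_apply (D : PDist) (W : Term) : ∑' V, D V * dirac V W = D W := by
  simp [dirac]

theorem tsum_mul_dirac_add_dirac (D E : PDist) (W : Term) :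
    ∑' V, ∑' U, D V * E U * ((dirac V W + dirac U W) / 2) =
      (D W * dsum E + E W * dsum D) / 2 := by
  have expand (V U : Term) : D V * E U * ((dirac V W + dirac U W) * 2⁻¹) =
      (D V * dirac V W * E U + E U * dirac U W * D V) * 2⁻¹ := by ring
  simp only [div_eq_mul_inv, expand, ENNReal.tsum_mul_right, ENNReal.tsum_add,
    ENNReal.tsum_mul_left, tsum_mul_dirac_apply, dsum]

/-- A reduction relation is deterministic if every term has at most one sequence of reducts, and
values have none. -/
structure IsDeterministic (Red : Term → List Term → Prop) : Prop where
  rightUnique : Relator.RightUnique Red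
  not_isValue : ∀ {M : Term} {Ns : List Term}, Red M Ns → ¬ M.IsValue

/-- Evaluation contexts of a reduction relation, encoded as the functions `C` that fill their hole.
How `C V` reduces for a value `V` is left open. -/
structure IsEvalContext (Red : Term → List Term → Prop) (C : Term → Term) : Prop where
  not_isValue : ∀ M : Term, ¬ (C M).IsValue
  red_fill : ∀ {M : Term} {Ns : List Term}, Red M Ns → Red (C M) (Ns.map C)
  exists_red : ∀ {M : Term} {Ns : List Term}, Red (C M) Ns → ¬ M.IsValue → ∃ Ms, Red M Ms

section Semantics

variable {Red : Term → List Term → Prop} {C : Term → Term} {M V W : Term} {D E : PDist}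

theorem le_semOf {S : Term → PDist → Prop} (h : S M D) (W : Term) : D W ≤ semOf S M W :=
  le_iSup₂ (f := fun (D : PDist) (_ : S M D) ↦ D W) D h

theorem Conv.isValue_of_ne_zero (h : Conv Red M D) (hV : D V ≠ 0) : V.IsValue := by
  induction h with
  | bot => exact absurd rfl hV
  | val hM =>
    obtain rfl : V = _ := by simpa [dirac] using hV
    exact hM
  | step Ds _ _ ih =>
    have : ∑ i, Ds i V ≠ 0 := fun h ↦ hV (by simp [h])
    obtain ⟨i, -, hi⟩ := Finset.exists_ne_zero_of_sum_ne_zero this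
    exact ih i hi

theorem semOf_conv_eq_zero_of_not_isValue (hV : ¬ V.IsValue) : semOf (Conv Red) M V = 0 := by
  simp only [semOf, ENNReal.iSup_eq_zero]
  exact fun D hD ↦ by_contra fun h ↦ hV (hD.isValue_of_ne_zero h)

theorem semOf_conv_eq_zero_of_stuck (hM : ¬ M.IsValue) (hstuck : ∀ Ns, ¬ Red M Ns) :
    semOf (Conv Red) M W = 0 := by
  simp only [semOf, ENNReal.iSup_eq_zero]
  intro D hD
  cases hD with
  | bot => rfl
  | val hM' => exact absurd hM' hM
  | step Ds hred => exact absurd hred (hstuck _)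

theorem Conv.exists_ge_ge (hRed : IsDeterministic Red) (hD : Conv Red M D) (hE : Conv Red M E) :
    ∃ F, Conv Red M F ∧ D ≤ F ∧ E ≤ F := by
  induction hD generalizing E with
  | bot => exact ⟨E, hE, fun _ ↦ zero_le, le_rfl⟩
  | val hM =>
    cases hE with
    | bot => exact ⟨_, .val hM, le_rfl, fun _ ↦ zero_le⟩
    | val => exact ⟨_, .val hM, le_rfl, le_rfl⟩
    | step _ hred => exact absurd hM (hRed.not_isValue hred)
  | step Ds hred hDs ih =>
    cases hE with
    | bot => exact ⟨_, .step Ds hred hDs, le_rfl, fun _ ↦ zero_le⟩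
    | val hM => exact absurd hM (hRed.not_isValue hred)
    | step Es hred' hEs =>
      obtain rfl := hRed.rightUnique hred hred'
      choose Fs hFs hDF hEF using fun i ↦ ih i (hEs i)
      refine ⟨_, .step Fs hred hFs, fun W ↦ ?_, fun W ↦ ?_⟩ <;> dsimp only <;> gcongr with i
      exacts [hDF i W, hEF i W]

theorem semOf_conv_of_isValue (hV : V.IsValue) (hirred : ∀ Ns, ¬ Red V Ns) :
    semOf (Conv Red) V = dirac V := by
  refine le_antisymm (fun W ↦ iSup₂_le fun D hD ↦ ?_) (le_semOf (.val hV))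
  cases hD with
  | bot => exact zero_le
  | val => exact le_rfl
  | step _ hred => exact absurd hred (hirred _)

theorem Conv.le_sum_semOf_conv_div (hRed : IsDeterministic Red) {Ns : List Term} (hred : Red M Ns)
    (hD : Conv Red M D) (W : Term) :
    D W ≤ (∑ i, semOf (Conv Red) (Ns.get i) W) / Ns.length := by
  cases hD with
  | bot => exact zero_le
  | val hM => exact absurd hM (hRed.not_isValue hred)
  | step Ds hred' hDs =>
    obtain rfl := hRed.rightUnique hred hred'
    exact ENNReal.div_le_div_right (Finset.sum_le_sum fun i _ ↦ le_semOf (hDs i) W) _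

theorem sum_semOf_conv_div_le {Ns : List Term} (hred : Red M Ns) (W : Term) :
    (∑ i, semOf (Conv Red) (Ns.get i) W) / Ns.length ≤ semOf (Conv Red) M W := by
  have (N : Term) : Nonempty {D // Conv Red N D} := ⟨⟨dzero, .bot N⟩⟩
  have semOf_eq (N : Term) : semOf (Conv Red) N W = ⨆ D : {D // Conv Red N D}, D.1 W :=
    iSup_subtype'
  simp only [semOf_eq (List.get _ _), finsetSum_iSup_eq_iSup_pi, ENNReal.iSup_div]
  exact iSup_le fun Ds ↦ le_semOf (Conv.step (fun i ↦ (Ds i).1) hred fun i ↦ (Ds i).2) W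

theorem semOf_conv_of_red (hRed : IsDeterministic Red) {Ns : List Term} (hred : Red M Ns)
    (W : Term) :
    semOf (Conv Red) M W = (Ns.map (semOf (Conv Red) · W)).sum / Ns.length := by
  rw [← Fin.sum_univ_fun_getElem]
  exact le_antisymm (iSup₂_le fun _ hD ↦ hD.le_sum_semOf_conv_div hRed hred W)
    (sum_semOf_conv_div_le hred W)

theorem tsum_semOf_conv_mul (hRed : IsDeterministic Red) (M : Term) (K : Term → ℝ≥0∞) :
    ∑' V, semOf (Conv Red) M V * K V = ⨆ D : {D // Conv Red M D}, ∑' V, D.1 V * K V := by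
  simp only [semOf, iSup_subtype', ENNReal.iSup_mul]
  refine tsum_iSup_eq_iSup_tsum_of_directed fun D E ↦ ?_
  obtain ⟨F, hF, hDF, hEF⟩ := D.2.exists_ge_ge hRed E.2
  exact ⟨⟨F, hF⟩, fun V ↦ ⟨mul_le_mul_left (hDF V) _, mul_le_mul_left (hEF V) _⟩⟩

theorem tsum_semOf_conv_mul_of_red (hRed : IsDeterministic Red) {Ns : List Term} (hred : Red M Ns)
    (K : Term → ℝ≥0∞) :
    ∑' V, semOf (Conv Red) M V * K V =
      (∑ i, ∑' V, semOf (Conv Red) (Ns.get i) V * K V) / Ns.length := by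
  simp only [semOf_conv_of_red hRed hred, ← Fin.sum_univ_fun_getElem, List.get_eq_getElem]
  exact tsum_finsetSum_div_mul ..

theorem Conv.tsum_mul_semOf_fill_le (hRed : IsDeterministic Red) (hC : IsEvalContext Red C)
    (hD : Conv Red M D) (W : Term) :
    ∑' V, D V * semOf (Conv Red) (C V) W ≤ semOf (Conv Red) (C M) W := by
  induction hD with
  | bot => simp [dzero]
  | val => exact (tsum_dirac_mul _ _).le
  | @step _ Ns Ds hred _ ih =>
    rw [tsum_finsetSum_div_mul, semOf_conv_of_red hRed (hC.red_fill hred), List.map_map,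
      List.length_map, ← Fin.sum_univ_fun_getElem]
    gcongr with i
    exact ih i

theorem Conv.le_tsum_semOf_mul_semOf_fill (hRed : IsDeterministic Red)
    (hC : IsEvalContext Red C) (hD : Conv Red (C M) D) (W : Term) :
    D W ≤ ∑' V, semOf (Conv Red) M V * semOf (Conv Red) (C V) W := by
  generalize hT : C M = T at hD
  induction hD generalizing M with
  | bot => exact zero_le
  | val hT' => exact absurd (hT ▸ hT') (hC.not_isValue M)
  | step Ds hred hDs ih =>
    subst hT
    by_cases hM : M.IsValue
    · rw [semOf_conv_of_isValue hM fun _ h ↦ hRed.not_isValue h hM, tsum_dirac_mul]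
      exact le_semOf (Conv.step Ds hred hDs) W
    · obtain ⟨Ms, hMs⟩ := hC.exists_red hred hM
      obtain rfl := hRed.rightUnique hred (hC.red_fill hMs)
      beta_reduce
      rw [tsum_semOf_conv_mul_of_red hRed hMs,
        ← Equiv.sum_comp (finCongr (Ms.length_map C).symm)]
      refine ENNReal.div_le_div (Finset.sum_le_sum fun i _ ↦ ih _ ?_) ?_ <;> simp

theorem semOf_conv_fill_eq_tsum (hRed : IsDeterministic Red) (hC : IsEvalContext Red C)
    (M W : Term) :
    semOf (Conv Red) (C M) W = ∑' V, semOf (Conv Red) M V * semOf (Conv Red) (C V) W := by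
  refine le_antisymm (iSup₂_le fun D hD ↦ hD.le_tsum_semOf_mul_semOf_fill hRed hC W) ?_
  rw [tsum_semOf_conv_mul hRed]
  exact iSup_le fun D ↦ D.2.tsum_mul_semOf_fill_le hRed hC W

theorem semOf_conv_binary_eq_tsum (hRed : IsDeterministic Red) {op : Term → Term → Term}
    (hleft : ∀ L, IsEvalContext Red (op · L))
    (hright : ∀ {V}, V.IsValue → IsEvalContext Red (op V)) (N L W : Term) :
    semOf (Conv Red) (op N L) W =
      ∑' V, ∑' U, semOf (Conv Red) N V * semOf (Conv Red) L U * semOf (Conv Red) (op V U) W := by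
  rw [semOf_conv_fill_eq_tsum hRed (hleft L)]
  refine tsum_congr fun V ↦ ?_
  by_cases hV : V.IsValue
  · simp only [semOf_conv_fill_eq_tsum hRed (hright hV) L, ← ENNReal.tsum_mul_left, mul_assoc]
  · simp [semOf_conv_eq_zero_of_not_isValue hV]

end Semantics

section CallByValue

theorem RedV.not_isValue {M : Term} {Ns : List Term} (h : RedV M Ns) : ¬ M.IsValue := by
  cases h <;> nofun

theorem RedV.rightUnique : Relator.RightUnique RedV := by
  intro M Ns Ns' h h'
  -- Two rules whose left-hand sides overlap would force a value to reduce.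
  induction h generalizing Ns' <;> cases h' <;> grind [RedV.not_isValue, IsValue.lam]

theorem RedV.isDeterministic : IsDeterministic RedV := ⟨RedV.rightUnique, RedV.not_isValue⟩

theorem isEvalContext_app_left (L : Term) : IsEvalContext RedV (app · L) where
  not_isValue _ := nofun
  red_fill := .appL
  exists_red h hM := by
    cases h with
    | beta => exact absurd (IsValue.lam _) hM
    | appL h => exact ⟨_, h⟩
    | appR hM' => exact absurd hM' hM

theorem isEvalContext_app_right {V : Term} (hV : V.IsValue) : IsEvalContext RedV (app V) where
  not_isValue _ := nofun
  red_fill := .appR hV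
  exists_red h hM := by
    cases h with
    | beta hM' => exact absurd hM' hM
    | appL h => exact absurd hV h.not_isValue
    | appR _ h => exact ⟨_, h⟩

theorem isEvalContext_choice_left (L : Term) : IsEvalContext RedV (choice · L) where
  not_isValue _ := nofun
  red_fill := .choiceL
  exists_red h hM := by
    cases h with
    | choice hM' => exact absurd hM' hM
    | choiceL h => exact ⟨_, h⟩
    | choiceR hM' => exact absurd hM' hM

theorem isEvalContext_choice_right {V : Term} (hV : V.IsValue) :
    IsEvalContext RedV (choice V) where
  not_isValue _ := nofun
  red_fill := .choiceR hV
  exists_red h hM := by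
    cases h with
    | choice _ hM' => exact absurd hM' hM
    | choiceL h => exact absurd hV h.not_isValue
    | choiceR _ h => exact ⟨_, h⟩

theorem semV_of_isValue {V : Term} (hV : V.IsValue) : semV V = dirac V :=
  semOf_conv_of_isValue hV fun _ h ↦ h.not_isValue hV

theorem isValue_of_semV_ne_zero {M V : Term} (h : semV M V ≠ 0) : V.IsValue :=
  by_contra fun hV ↦ h (semOf_conv_eq_zero_of_not_isValue hV)

theorem semV_of_red {M : Term} {Ns : List Term} (h : RedV M Ns) (W : Term) :
    semV M W = (Ns.map (semV · W)).sum / Ns.length :=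
  semOf_conv_of_red RedV.isDeterministic h W

theorem semV_app_lam_of_isValue {P V : Term} (hV : V.IsValue) :
    semV (app (lam P) V) = semV (P.subst 0 V) := by
  funext W
  simp [semV_of_red (.beta hV)]

theorem semV_app_var_of_isValue (n : ℕ) {V : Term} (hV : V.IsValue) (W : Term) :
    semV (app (var n) V) W = 0 := by
  refine semOf_conv_eq_zero_of_stuck nofun fun Ns h ↦ ?_
  cases h with
  | appL h => exact h.not_isValue (.var n)
  | appR _ h => exact h.not_isValue hV

theorem semV_choice_of_isValue {V U : Term} (hV : V.IsValue) (hU : U.IsValue) (W : Term) :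
    semV (choice V U) W = (dirac V W + dirac U W) / 2 := by
  simp [semV_of_red (.choice hV hU), semV_of_isValue hV, semV_of_isValue hU]

theorem semV_app (N L W : Term) :
    semV (app N L) W =
      ∑' P, ∑' V, semV N (lam P) * semV L V * semV (P.subst 0 V) W := by
  have support_subset : (Function.support fun F ↦
      ∑' V, semV N F * semV L V * semV (app F V) W) ⊆ Set.range lam := by
    intro F hF
    obtain ⟨V, hV⟩ : ∃ V, semV N F * semV L V * semV (app F V) W ≠ 0 := by
      by_contra! h
      exact hF (by simp [h])
    obtain ⟨⟨hNF, hLV⟩, happ⟩ := by simpa only [mul_ne_zero_iff] using hV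
    cases isValue_of_semV_ne_zero hNF with
    | var n => exact absurd (semV_app_var_of_isValue n (isValue_of_semV_ne_zero hLV) W) happ
    | lam P => exact ⟨P, rfl⟩
  calc semV (app N L) W
    _ = ∑' F, ∑' V, semV N F * semV L V * semV (app F V) W :=
      semOf_conv_binary_eq_tsum RedV.isDeterministic isEvalContext_app_left
        isEvalContext_app_right N L W
    _ = ∑' P, ∑' V, semV N (lam P) * semV L V * semV (app (lam P) V) W :=
      (Function.Injective.tsum_eq (fun _ _ ↦ lam.inj) support_subset).symm
    _ = ∑' P, ∑' V, semV N (lam P) * semV L V * semV (P.subst 0 V) W := by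
      refine tsum_congr fun P ↦ tsum_congr fun V ↦ ?_
      by_cases hLV : semV L V = 0
      · simp [hLV]
      · rw [semV_app_lam_of_isValue (isValue_of_semV_ne_zero hLV)]

theorem semV_choice (N L W : Term) :
    semV (choice N L) W = (semV N W * dsum (semV L) + semV L W * dsum (semV N)) / 2 := by
  calc semV (choice N L) W
    _ = ∑' V, ∑' U, semV N V * semV L U * semV (choice V U) W :=
      semOf_conv_binary_eq_tsum RedV.isDeterministic isEvalContext_choice_left
        isEvalContext_choice_right N L W
    _ = ∑' V, ∑' U, semV N V * semV L U * ((dirac V W + dirac U W) / 2) := by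
      refine tsum_congr fun V ↦ tsum_congr fun U ↦ ?_
      by_cases h : semV N V * semV L U = 0
      · simp only [h, zero_mul]
      · obtain ⟨hNV, hLU⟩ := mul_ne_zero_iff.mp h
        rw [semV_choice_of_isValue (isValue_of_semV_ne_zero hNV) (isValue_of_semV_ne_zero hLU)]
    _ = (semV N W * dsum (semV L) + semV L W * dsum (semV N)) / 2 :=
      tsum_mul_dirac_add_dirac _ _ W

theorem semV_compositional_general (M : Term) :
    (M.IsValue → semV M = dirac M) ∧
    (∀ N L : Term, M = .app N L →
      semV M = fun W => ∑' (P : Term), ∑' (V : Term),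
        semV N (.lam P) * semV L V * semV (P.subst 0 V) W) ∧
    (∀ N L : Term, M = .choice N L →
      semV M = fun W =>
        (semV N W * dsum (semV L) + semV L W * dsum (semV N)) / 2) := by
  refine ⟨semV_of_isValue, ?_, ?_⟩
  · rintro N L rfl
    exact funext (semV_app N L)
  · rintro N L rfl
    exact funext (semV_choice N L)

end CallByValue

/-- the call-by-value small-step semantics is compositional. -/
theorem semV_compositional (M : Term) (hM : M.Closed) :
    (M.IsValue → semV M = dirac M) ∧
    (∀ N L : Term, M = .app N L →
      semV M = fun W => ∑' (P : Term), ∑' (V : Term),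
        semV N (.lam P) * semV L V * semV (P.subst 0 V) W) ∧
    (∀ N L : Term, M = .choice N L →
      semV M = fun W =>
        (semV N W * dsum (semV L) + semV L W * dsum (semV N)) / 2) :=
  semV_compositional_general M
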